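/- Let ν ≥ −1/2. Then for all x > 0, x · K_{ν+2}(x) · I_ν(x) < 1 + (2ν+3)/x. -/

import Mathlib

open Real MeasureTheory

/-- Modified Bessel function of the first kind, `I_ν(x) = ∑_{k} (x/2)^{ν+2k} / (Γ(ν+k+1) k!)`. -/
noncomputable def besselI (ν x : ℝ) : ℝ :=
  ∑' k : ℕ, (x / 2) ^ (ν + 2 * (k : ℝ)) / (Real.Gamma (ν + (k : ℝ) + 1) * (Nat.factorial k : ℝ))

/-- Modified Bessel function of the second kind, `K_ν(x) = ∫_0^∞ e^{-x cosh t} cosh(ν t) dt`. -/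
noncomputable def besselK (ν x : ℝ) : ℝ :=
  ∫ t in Set.Ioi (0 : ℝ), Real.exp (-x * Real.cosh t) * Real.cosh (ν * t)

/-- Lower incomplete gamma function `γ(a, x) = ∫_0^x t^{a-1} e^{-t} dt`. -/
noncomputable def lowerIncGamma (a x : ℝ) : ℝ :=
  ∫ t in (0 : ℝ)..x, t ^ (a - 1) * Real.exp (-t)

open Filter Topology Set

noncomputable def auxF (a y : ℝ) : ℝ := ∫ t in Ioi (0:ℝ), t ^ a * rexp (-t - y / t)

noncomputable def auxG (a y : ℝ) : ℝ := ∑' k : ℕ, (Gamma (a + k + 1))⁻¹ * (y ^ k / (Nat.factorial k : ℝ))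

lemma aux_bound (a y t : ℝ) (hy : 0 < y) (ht : 0 < t) (n : ℕ) :
    t ^ a * rexp (-t - y / t) ≤ (n.factorial / y ^ n) * (rexp (-t) * t ^ (a + n)) := by
  have h1 := Real.pow_div_factorial_le_exp (y / t) (by positivity) n
  have h2 : rexp (-(y/t)) ≤ n.factorial / y ^ n * t ^ n := by
    rw [Real.exp_neg]
    have : (n.factorial / y ^ n * t ^ n : ℝ) = ((y / t) ^ n / n.factorial)⁻¹ := by
      rw [div_pow]
      field_simp
    rw [this]
    exact inv_anti₀ (by positivity) h1
  rw [rpow_add_natCast ht.ne', sub_eq_add_neg, Real.exp_add]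
  calc t ^ a * (rexp (-t) * rexp (-(y/t))) ≤ t ^ a * (rexp (-t) * (n.factorial / y ^ n * t ^ n)) := by
        gcongr
    _ = _ := by ring

lemma aux_meas (a y : ℝ) : AEStronglyMeasurable (fun t : ℝ => t ^ a * rexp (-t - y / t))
    (volume.restrict (Ioi 0)) := by
  apply Measurable.aestronglyMeasurable
  fun_prop

lemma aux_int (a y : ℝ) (hy : 0 < y) :
    IntegrableOn (fun t : ℝ => t ^ a * rexp (-t - y / t)) (Ioi 0) := by
  obtain ⟨n, hn⟩ := exists_nat_gt (-a)
  have h := (Real.GammaIntegral_convergent (s := a + n + 1) (by linarith)).const_mul (n.factorial / y ^ n)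
  refine Integrable.mono' h (aux_meas a y) ?_
  refine (ae_restrict_mem measurableSet_Ioi).mono fun t ht => ?_
  have ht : 0 < t := ht
  rw [Real.norm_of_nonneg (by positivity)]
  convert aux_bound a y t hy ht n using 4
  ring

lemma auxF_nonneg (a y : ℝ) : 0 ≤ auxF a y := by
  refine setIntegral_nonneg measurableSet_Ioi fun t ht => ?_
  have ht : 0 < t := ht
  positivity

lemma auxF_le (a y : ℝ) (ha : -1 < a) (hy : 0 < y) : auxF a y ≤ Gamma (a + 1) := by
  rw [Real.Gamma_eq_integral (by linarith)]
  refine setIntegral_mono_on (aux_int a y hy) (Real.GammaIntegral_convergent (by linarith))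
    measurableSet_Ioi fun t ht => ?_
  have ht : 0 < t := ht
  have := aux_bound a y t hy ht 0
  simpa using this

lemma auxF_hasDerivAt (a y : ℝ) (hy : 0 < y) :
    HasDerivAt (auxF a) (-auxF (a - 1) y) y := by
  have key := hasDerivAt_integral_of_dominated_loc_of_deriv_le (μ := volume.restrict (Ioi (0:ℝ)))
    (F := fun y t => t ^ a * rexp (-t - y / t))
    (F' := fun y t => -(t ^ (a-1) * rexp (-t - y / t))) (x₀ := y) (s := Ioi (y/2))
    (bound := fun t => t ^ (a-1) * rexp (-t - (y/2) / t))
    (Ioi_mem_nhds (by linarith))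
    (Eventually.of_forall fun z => aux_meas a z) (aux_int a y hy)
    (aux_meas (a-1) y).neg ?_ (aux_int (a-1) (y/2) (by linarith)) ?_
  · have := key.2
    rw [integral_neg] at this
    exact this
  · refine (ae_restrict_mem measurableSet_Ioi).mono fun t ht z hz => ?_
    have ht : 0 < t := ht
    have hz : y / 2 < z := hz
    rw [norm_neg, Real.norm_of_nonneg (by positivity)]
    gcongr
  · refine (ae_restrict_mem measurableSet_Ioi).mono fun t ht z hz => ?_
    have ht : 0 < t := ht
    have h : HasDerivAt (fun z : ℝ => -t - z / t) (-(1/t)) z :=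
      ((hasDerivAt_id z).div_const t).const_sub (-t)
    refine (h.exp.const_mul (t ^ a)).congr_deriv ?_
    rw [rpow_sub_one ht.ne']
    field_simp

lemma auxF_rec (a y : ℝ) (hy : 0 < y) :
    auxF a y = a * auxF (a - 1) y + y * auxF (a - 2) y := by
  have hu : ∀ t ∈ Ioi (0:ℝ), HasDerivAt (fun t : ℝ => t ^ a) (a * t ^ (a-1)) t := fun t ht =>
    Real.hasDerivAt_rpow_const (Or.inl (ne_of_gt ht))
  have hv : ∀ t ∈ Ioi (0:ℝ), HasDerivAt (fun t : ℝ => rexp (-t - y / t))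
      (rexp (-t - y / t) * (-1 + y / t ^ 2)) t := fun t ht => by
    have ht : 0 < t := ht
    have h : HasDerivAt (fun t : ℝ => -t - y / t) (-1 + y / t ^ 2) t := by
      have := (hasDerivAt_id t).neg.sub ((hasDerivAt_const t y).div (hasDerivAt_id t) ht.ne')
      refine this.congr_deriv ?_
      simp
      ring
    exact h.exp
  have e : ∀ t ∈ Ioi (0:ℝ), (a * t ^ (a-1)) * rexp (-t - y / t) +
      t ^ a * (rexp (-t - y / t) * (-1 + y / t ^ 2)) =
      (a * (t ^ (a-1) * rexp (-t - y / t)) + y * (t ^ (a-2) * rexp (-t - y / t))) -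
        t ^ a * rexp (-t - y / t) := fun t ht => by
    have ht : 0 < t := ht
    have : t ^ (a - 2) = t ^ a / t ^ 2 := by
      rw [rpow_sub ht]; norm_num
    rw [this]
    ring
  have I1 := (aux_int (a-1) y hy).const_mul a
  have I2 := (aux_int (a-2) y hy).const_mul y
  have I3 := aux_int a y hy
  have hI : IntegrableOn ((fun t : ℝ => a * t ^ (a-1)) * (fun t : ℝ => rexp (-t - y / t)) +
      (fun t : ℝ => t ^ a) * (fun t => rexp (-t - y / t) * (-1 + y / t ^ 2))) (Ioi 0) :=
    ((I1.add I2).sub I3).congr ((ae_restrict_mem measurableSet_Ioi).mono fun t ht => (e t ht).symm)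
  have hinf : Tendsto ((fun t : ℝ => t ^ a) * (fun t : ℝ => rexp (-t - y / t))) atTop (𝓝 0) :=
    tendsto_zero_of_hasDerivAt_of_integrableOn_Ioi (fun t ht => (hu t ht).mul (hv t ht)) hI I3
  have hz : Tendsto ((fun t : ℝ => t ^ a) * (fun t : ℝ => rexp (-t - y / t))) (𝓝[>] 0) (𝓝 0) := by
    obtain ⟨n, hn⟩ := exists_nat_gt (-a)
    have hc : Tendsto (fun t : ℝ => (n.factorial / y ^ n) * (rexp (-t) * t ^ (a + n))) (𝓝[>] 0)
        (𝓝 ((n.factorial / y ^ n) * (rexp (-0) * 0 ^ (a + n)))) := by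
      apply Tendsto.mono_left _ nhdsWithin_le_nhds
      apply Tendsto.const_mul
      apply Tendsto.mul
      · exact (Continuous.tendsto (by fun_prop) 0)
      · exact (Real.continuousAt_rpow_const 0 (a+n) (Or.inr (by linarith)))
    rw [zero_rpow (by linarith), mul_zero, mul_zero] at hc
    refine squeeze_zero' ?_ ?_ hc
    · filter_upwards [self_mem_nhdsWithin] with t ht
      have ht : 0 < t := ht
      simp only [Pi.mul_apply]
      positivity
    · filter_upwards [self_mem_nhdsWithin] with t ht
      exact aux_bound a y t hy ht n
  have := integral_Ioi_deriv_mul_eq_sub hu hv hI hz hinf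
  rw [setIntegral_congr_fun measurableSet_Ioi e] at this
  have h5 := integral_sub (I1.add I2) I3
  simp only [Pi.add_apply] at h5
  rw [h5, integral_add I1 I2, integral_const_mul, integral_const_mul] at this
  unfold auxF
  linarith

lemma aux_c_bound (a : ℝ) (ha : -(1/2) ≤ a) (k : ℕ) :
    0 < (Gamma (a + k + 1))⁻¹ ∧ (Gamma (a + k + 1))⁻¹ ≤ (Gamma (a + 1))⁻¹ * 2 ^ k := by
  induction k with
  | zero => 
    have := Gamma_pos_of_pos (s := a + 1) (by linarith)
    simp [this]
  | succ k ih =>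
    have hk : (0:ℝ) ≤ k := by positivity
    have e : Gamma (a + (k + 1 : ℕ) + 1) = (a + k + 1) * Gamma (a + k + 1) := by
      rw [← Real.Gamma_add_one (by linarith)]; push_cast; ring_nf
    rw [e, mul_inv]
    have hp : (0:ℝ) < a + k + 1 := by linarith
    refine ⟨by have := ih.1; positivity, ?_⟩
    have h2 : (a + k + 1)⁻¹ ≤ 2 := by
      rw [inv_le_comm₀ hp (by norm_num)]; linarith
    calc _ ≤ 2 * ((Gamma (a + 1))⁻¹ * 2 ^ k) := by
          have := ih.1.le
          gcongr
          exact ih.2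
      _ = _ := by ring

lemma auxG_summable (a y : ℝ) (ha : -(1/2) ≤ a) :
    Summable (fun k : ℕ => (Gamma (a + k + 1))⁻¹ * (y ^ k / (Nat.factorial k : ℝ))) := by
  refine Summable.of_norm_bounded ((Real.summable_pow_div_factorial (2 * |y|)).mul_left (Gamma (a+1))⁻¹) ?_
  intro k
  obtain ⟨h1, h2⟩ := aux_c_bound a ha k
  rw [norm_mul, norm_div, norm_pow, Real.norm_of_nonneg h1.le, Real.norm_eq_abs]
  simp only [RCLike.norm_natCast]
  calc _ ≤ (Gamma (a + 1))⁻¹ * 2 ^ k * (|y| ^ k / (Nat.factorial k : ℝ)) := by gcongr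
    _ = _ := by rw [mul_pow]; ring

lemma auxG_nonneg (a y : ℝ) (ha : -(1/2) ≤ a) (hy : 0 ≤ y) : 0 ≤ auxG a y :=
  tsum_nonneg fun k => by
    have := (aux_c_bound a ha k).1
    positivity

lemma auxG_zero (a : ℝ) : auxG a 0 = (Gamma (a + 1))⁻¹ := by
  unfold auxG
  rw [tsum_eq_single 0]
  · simp
  · intro k hk
    simp [hk]

lemma auxG_deriv_aux (a y : ℝ) (k : ℕ) :
    (Gamma (a + (k + 1 : ℕ) + 1))⁻¹ * (((k + 1 : ℕ) : ℝ) * y ^ (k + 1 - 1) / (Nat.factorial (k + 1) : ℝ))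
      = (Gamma (a + 1 + k + 1))⁻¹ * (y ^ k / (Nat.factorial k : ℝ)) := by
  rw [Nat.factorial_succ]
  push_cast
  rw [show a + (k + 1) + 1 = a + 1 + (k:ℝ) + 1 by ring]
  congr 1
  field_simp

lemma auxG_hasDerivAt (a y : ℝ) (ha : -(1/2) ≤ a) :
    HasDerivAt (auxG a) (auxG (a + 1) y) y := by
  set R := |y| + 1 with hR
  have hR0 : 0 ≤ R := by positivity
  have hs : Summable (fun k : ℕ => (Gamma (a + k + 1))⁻¹ * ((k:ℝ) * R ^ (k - 1) / (Nat.factorial k : ℝ))) := by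
    rw [← summable_nat_add_iff 1]
    refine (auxG_summable (a+1) R (by linarith)).congr fun k => ?_
    exact (auxG_deriv_aux a R k).symm
  have key := hasDerivAt_tsum_of_isPreconnected
    (g := fun (k : ℕ) (z : ℝ) => (Gamma (a + k + 1))⁻¹ * (z ^ k / (Nat.factorial k : ℝ)))
    (g' := fun (k : ℕ) (z : ℝ) => (Gamma (a + k + 1))⁻¹ * ((k:ℝ) * z ^ (k - 1) / (Nat.factorial k : ℝ)))
    (t := Metric.ball 0 R) (y₀ := y) (y := y) hs Metric.isOpen_ball
    (convex_ball (0:ℝ) R).isPreconnected ?_ ?_ (by simp [hR]) (auxG_summable a y ha) (by simp [hR])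
  · refine key.congr_deriv ?_
    rw [← Summable.sum_add_tsum_nat_add 1]
    · simp only [Finset.range_one, Finset.sum_singleton, Nat.cast_zero, zero_mul, zero_div, mul_zero, zero_add]
      unfold auxG
      exact tsum_congr fun k => auxG_deriv_aux a y k
    · rw [← summable_nat_add_iff 1]
      refine (auxG_summable (a+1) y (by linarith)).congr fun k => ?_
      exact (auxG_deriv_aux a y k).symm
  · intro k z _
    exact ((hasDerivAt_pow k z).div_const _).const_mul _
  · intro k z hz
    have hz : |z| < R := by simpa using hz
    have h1 := (aux_c_bound a ha k).1
    rw [norm_mul, norm_div, norm_mul, norm_pow, Real.norm_of_nonneg h1.le, Real.norm_eq_abs z]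
    simp only [RCLike.norm_natCast]
    gcongr

lemma auxG_rec (a y : ℝ) (ha : -(1/2) ≤ a) :
    auxG a y = (a + 1) * auxG (a + 1) y + y * auxG (a + 2) y := by
  have e : ∀ k : ℕ, (Gamma (a + k + 1))⁻¹ * (y ^ k / (Nat.factorial k : ℝ)) =
      (a + 1) * ((Gamma (a + 1 + k + 1))⁻¹ * (y ^ k / (Nat.factorial k : ℝ))) +
      y * ((Gamma (a + 1 + k + 1))⁻¹ * ((k:ℝ) * y ^ (k - 1) / (Nat.factorial k : ℝ))) := by
    intro k
    have hk : (0:ℝ) ≤ k := by positivity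
    have h0 : a + k + 1 ≠ 0 := by linarith
    have hg : Gamma (a + k + 1) ≠ 0 := (Gamma_pos_of_pos (by linarith)).ne'
    rw [show a + 1 + k + 1 = (a + k + 1) + 1 by ring, Real.Gamma_add_one h0]
    rcases k with _ | k
    · simp at h0 hg ⊢
      field_simp
    · simp only [Nat.add_sub_cancel]
      rw [pow_succ]
      field_simp
      ring
  have h2 : y * auxG (a + 2) y = ∑' k : ℕ,
      y * ((Gamma (a + 1 + k + 1))⁻¹ * ((k:ℝ) * y ^ (k - 1) / (Nat.factorial k : ℝ))) := by
    rw [tsum_mul_left]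
    congr 1
    rw [← Summable.sum_add_tsum_nat_add 1]
    · simp only [Finset.range_one, Finset.sum_singleton, Nat.cast_zero, zero_mul, zero_div, mul_zero, zero_add]
      unfold auxG
      refine tsum_congr fun k => ?_
      rw [auxG_deriv_aux (a+1) y k]
      ring_nf
    · rw [← summable_nat_add_iff 1]
      refine (auxG_summable (a+1+1) y (by linarith)).congr fun k => ?_
      exact (auxG_deriv_aux (a+1) y k).symm
  have s2 : Summable fun k : ℕ => 
      y * ((Gamma (a + 1 + k + 1))⁻¹ * ((k:ℝ) * y ^ (k - 1) / (Nat.factorial k : ℝ))) := by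
    apply Summable.mul_left
    rw [← summable_nat_add_iff 1]
    refine (auxG_summable (a+1+1) y (by linarith)).congr fun k => ?_
    exact (auxG_deriv_aux (a+1) y k).symm
  rw [h2]
  unfold auxG
  rw [tsum_congr e, Summable.tsum_add ((auxG_summable (a+1) y (by linarith)).mul_left _) s2,
    tsum_mul_left]

lemma aux_yF (a y : ℝ) (ha : -(1/2) ≤ a) (hy : 0 < y) :
    y * auxF (a - 1) y ≤ y ^ (1/4:ℝ) * Gamma (a + 3/4) := by
  rw [Real.Gamma_eq_integral (by linarith), auxF, ← integral_const_mul, ← integral_const_mul]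
  refine setIntegral_mono_on ((aux_int _ y hy).const_mul _)
    ((Real.GammaIntegral_convergent (by linarith)).const_mul _) measurableSet_Ioi fun t ht => ?_
  have ht : 0 < t := ht
  have hz : 0 < y / t := by positivity
  have h1 : (y / t) * rexp (-(y/t)) ≤ (y/t) ^ (1/4:ℝ) := by
    rcases le_total (y/t) 1 with h | h
    · calc (y / t) * rexp (-(y/t)) ≤ (y/t) * 1 := by
            gcongr; exact Real.exp_le_one_iff.2 (by linarith)
        _ = (y/t) ^ (1:ℝ) := by simp
        _ ≤ _ := Real.rpow_le_rpow_of_exponent_ge hz h (by norm_num)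
    · have h3 : 1 ≤ (y/t) ^ (1/4:ℝ) := Real.one_le_rpow h (by norm_num)
      refine le_trans ?_ h3
      rw [Real.exp_neg, ← div_eq_mul_inv, div_le_one (Real.exp_pos _)]
      linarith [Real.add_one_le_exp (y/t)]
  have e1 : t ^ (a - 1) = t ^ a / t := rpow_sub_one ht.ne' a
  have e2 : t ^ (a + 3/4 - 1) = t ^ a / t ^ (1/4:ℝ) := by
    rw [← rpow_sub ht]; congr 1; ring
  have e3 : (y/t) ^ (1/4:ℝ) = y ^ (1/4:ℝ) / t ^ (1/4:ℝ) := Real.div_rpow hy.le ht.le _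
  rw [e1, e2, sub_eq_add_neg, Real.exp_add]
  calc _ = (t ^ a * rexp (-t)) * ((y / t) * rexp (-(y/t))) := by ring
    _ ≤ (t ^ a * rexp (-t)) * (y/t) ^ (1/4:ℝ) := by gcongr
    _ = _ := by rw [e3]; ring

/-- The Wronskian-type upper bound. -/
lemma auxFG_le (a y : ℝ) (ha : -(1/2) ≤ a) (hy : 0 < y) :
    auxF a y * auxG a y ≤ 1 := by
  set W : ℝ → ℝ := fun z => auxF a z * auxG a z + z * auxF (a-1) z * auxG (a+1) z with hW
  have hd : ∀ z ∈ Ioi (0:ℝ), HasDerivAt W 0 z := by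
    intro z hz
    have hz : 0 < z := hz
    have h := ((auxF_hasDerivAt a z hz).mul (auxG_hasDerivAt a z ha)).add
      (((hasDerivAt_id z).mul (auxF_hasDerivAt (a-1) z hz)).mul (auxG_hasDerivAt (a+1) z (by linarith)))
    refine h.congr_deriv ?_
    have r1 := auxF_rec a z hz
    have r2 := auxG_rec a z ha
    simp only [id, Pi.mul_apply]
    rw [show a + 1 + 1 = a + 2 by ring, show a - 1 - 1 = a - 2 by ring, r1, r2]
    ring
  have hconst : ∀ z ∈ Ioi (0:ℝ), W y = W z := fun z hz =>
    isOpen_Ioi.is_const_of_deriv_eq_zero isPreconnected_Ioi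
      (fun w hw => (hd w hw).differentiableAt.differentiableWithinAt)
      (fun w hw => (hd w hw).deriv) hy hz
  have hle : ∀ z ∈ Ioi (0:ℝ), W y ≤ Gamma (a+1) * auxG a z +
      z ^ (1/4:ℝ) * Gamma (a + 3/4) * auxG (a+1) z := by
    intro z hz
    rw [hconst z hz, hW]
    have hz : 0 < z := hz
    have g1 := auxG_nonneg a z ha hz.le
    have g2 := auxG_nonneg (a+1) z (by linarith) hz.le
    have := auxF_le a z (by linarith) hz
    have := aux_yF a z ha hz
    dsimp only
    gcongr
  have hlim : Tendsto (fun z => Gamma (a+1) * auxG a z +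
      z ^ (1/4:ℝ) * Gamma (a + 3/4) * auxG (a+1) z) (𝓝[>] 0) (𝓝 (Gamma (a+1) * auxG a 0 +
      0 ^ (1/4:ℝ) * Gamma (a + 3/4) * auxG (a+1) 0)) := by
    apply Tendsto.mono_left _ nhdsWithin_le_nhds
    have c1 : Tendsto (auxG a) (𝓝 0) (𝓝 (auxG a 0)) := (auxG_hasDerivAt a 0 ha).continuousAt
    have c2 : Tendsto (auxG (a+1)) (𝓝 0) (𝓝 (auxG (a+1) 0)) :=
      (auxG_hasDerivAt (a+1) 0 (by linarith)).continuousAt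
    have c3 : Tendsto (fun z : ℝ => z ^ (1/4:ℝ)) (𝓝 0) (𝓝 (0 ^ (1/4:ℝ))) :=
      Real.continuousAt_rpow_const 0 _ (Or.inr (by norm_num))
    exact (c1.const_mul _).add ((c3.mul_const _).mul c2)
  have hg : Gamma (a+1) ≠ 0 := (Gamma_pos_of_pos (by linarith)).ne'
  rw [auxG_zero, mul_inv_cancel₀ hg, zero_rpow (by norm_num), zero_mul, zero_mul, add_zero] at hlim
  have hW1 : W y ≤ 1 := ge_of_tendsto hlim (by
    filter_upwards [self_mem_nhdsWithin] with z hz using hle z hz)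
  have : 0 ≤ y * auxF (a-1) y * auxG (a+1) y := by
    have := auxF_nonneg (a-1) y
    have := auxG_nonneg (a+1) y (by linarith) hy.le
    positivity
  have hWy : W y = auxF a y * auxG a y + y * auxF (a-1) y * auxG (a+1) y := rfl
  linarith

lemma besselI_eq (ν x : ℝ) (hx : 0 < x) : besselI ν x = (x/2) ^ ν * auxG ν (x^2/4) := by
  unfold besselI auxG
  rw [← tsum_mul_left]
  refine tsum_congr fun k => ?_
  rw [rpow_add (by positivity)]
  have : (x / 2) ^ (2 * (k:ℝ)) = (x^2/4) ^ k := by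
    rw [rpow_mul (by positivity), rpow_natCast]
    congr 1
    norm_num
    ring
  rw [this, div_eq_mul_inv, mul_inv]
  ring

lemma aux_subst (μ x : ℝ) (hx : 0 < x) :
    auxF (μ - 1) (x^2/4) = (x/2) ^ μ * ∫ t : ℝ, rexp (-x * cosh t) * rexp (μ * t) ∧
    Integrable (fun t : ℝ => rexp (-x * cosh t) * rexp (μ * t)) := by
  have him : (fun t => x / 2 * rexp t) '' univ = Ioi 0 := by
    ext u
    simp only [image_univ, mem_range, mem_Ioi]
    constructor
    · rintro ⟨t, rfl⟩; positivity
    · intro hu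
      refine ⟨log (u / (x/2)), ?_⟩
      rw [Real.exp_log (by positivity)]
      field_simp
  have hder : ∀ t ∈ univ, HasDerivWithinAt (fun t => x / 2 * rexp t) (x / 2 * rexp t) univ t :=
    fun t _ => ((Real.hasDerivAt_exp t).const_mul _).hasDerivWithinAt
  have hinj : InjOn (fun t => x / 2 * rexp t) univ := by
    intro s _ t _ h
    have h : x / 2 * rexp s = x / 2 * rexp t := h
    exact Real.exp_injective (mul_left_cancel₀ (by positivity) h)
  have e : ∀ t : ℝ, |x / 2 * rexp t| • ((x / 2 * rexp t) ^ (μ - 1) *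
      rexp (-(x / 2 * rexp t) - x^2/4 / (x / 2 * rexp t))) =
      (x/2) ^ μ * (rexp (-x * cosh t) * rexp (μ * t)) := by
    intro t
    have hp : 0 < x / 2 * rexp t := by positivity
    rw [abs_of_pos hp, rpow_sub_one hp.ne', mul_rpow (by positivity) (by positivity),
      ← Real.exp_mul, smul_eq_mul, Real.cosh_eq, mul_comm t μ]
    have : -(x / 2 * rexp t) - x^2/4 / (x / 2 * rexp t) = -x * ((rexp t + rexp (-t)) / 2) := by
      rw [Real.exp_neg]
      field_simp
      ring
    rw [this]
    field_simp
  have hy : 0 < x^2/4 := by positivity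
  constructor
  · unfold auxF
    rw [← him, integral_image_eq_integral_abs_deriv_smul MeasurableSet.univ hder hinj]
    simp only [e]
    rw [integral_const_mul, setIntegral_univ]
  · have h := aux_int (μ - 1) (x^2/4) hy
    rw [← him, integrableOn_image_iff_integrableOn_abs_deriv_smul MeasurableSet.univ hder hinj] at h
    simp only [e] at h
    rw [integrableOn_univ] at h
    have h2 := h.const_mul ((x/2) ^ μ)⁻¹
    refine h2.congr (Eventually.of_forall fun t => ?_)
    have : (x/2) ^ μ ≠ 0 := by positivity
    simp only
    field_simp

lemma besselK_int (μ x : ℝ) (hx : 0 < x) :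
    IntegrableOn (fun t : ℝ => rexp (-x * cosh t) * cosh (μ * t)) (Ioi 0) := by
  have h := ((aux_subst μ x hx).2.add (aux_subst (-μ) x hx).2).div_const 2
  refine (h.congr (Eventually.of_forall fun t => ?_)).integrableOn
  simp only [Pi.add_apply, Real.cosh_eq (μ * t), neg_mul]
  ring

lemma besselK_eq (μ x : ℝ) (hx : 0 < x) :
    auxF (μ - 1) (x^2/4) = 2 * (x/2) ^ μ * besselK μ x := by
  obtain ⟨h1, h2⟩ := aux_subst μ x hx
  rw [h1, ← intervalIntegral.integral_Iic_add_Ioi (b := 0) h2.integrableOn h2.integrableOn]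
  have h3 : ∫ t in Iic (0:ℝ), rexp (-x * cosh t) * rexp (μ * t) =
      ∫ t in Ioi (0:ℝ), rexp (-x * cosh t) * rexp (-μ * t) := by
    have := integral_comp_neg_Ioi (0:ℝ) (fun t : ℝ => rexp (-x * cosh t) * rexp (μ * t))
    rw [neg_zero] at this
    rw [← this]
    simp
  rw [h3, ← integral_add (aux_subst (-μ) x hx).2.integrableOn h2.integrableOn, besselK, mul_comm 2,
    mul_assoc, ← integral_const_mul (2:ℝ)]
  congr 1
  refine integral_congr_ae (Eventually.of_forall fun t => ?_)
  simp only [Real.cosh_eq (μ * t), neg_mul]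
  ring

theorem stmt_9 (ν : ℝ) (hν : -(1/2) ≤ ν) (x : ℝ) (hx : 0 < x) :
    x * besselK (ν + 2) x * besselI ν x < 1 + (2 * ν + 3) / x := by
  have hy : 0 < x^2/4 := by positivity
  have hG := auxG_nonneg ν _ hν hy.le
  have hFG := auxFG_le ν _ hν hy
  have hrec := auxF_rec (ν+1) _ hy
  have k0 := besselK_eq ν x hx
  have k1 := besselK_eq (ν+1) x hx
  have k2 := besselK_eq (ν+2) x hx
  rw [show ν + 1 - 1 = ν by ring, show ν + 1 - 2 = ν - 1 by ring] at hrec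
  rw [show ν + 1 - 1 = ν by ring] at k1
  rw [show ν + 2 - 1 = ν + 1 by ring] at k2
  have hx2 : 0 < x / 2 := by positivity
  rw [rpow_add_one hx2.ne'] at k1
  rw [show ν + 2 = ν + (2:ℕ) by norm_num, rpow_add_natCast hx2.ne'] at k2
  push_cast at k2
  have hmono : besselK ν x ≤ besselK (ν+1) x := by
    refine setIntegral_mono_on (besselK_int ν x hx) (besselK_int (ν+1) x hx) measurableSet_Ioi
      fun t ht => ?_
    have ht : 0 < t := ht
    have : cosh (ν * t) ≤ cosh ((ν+1) * t) := by
      rw [Real.cosh_le_cosh, abs_mul, abs_mul]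
      refine mul_le_mul_of_nonneg_right ?_ (abs_nonneg t)
      rw [abs_of_pos (show 0 < ν + 1 by linarith)]
      exact abs_le.2 ⟨by linarith, by linarith⟩
    gcongr
  have hp : 0 < (x/2) ^ ν := by positivity
  have hF : (x/2) * auxF (ν-1) (x^2/4) ≤ auxF ν (x^2/4) := by
    rw [k0, k1]
    calc _ = 2 * ((x/2) ^ ν * (x/2)) * besselK ν x := by ring
      _ ≤ _ := by gcongr
  rw [besselI_eq ν x hx]
  have e : x * besselK (ν+2) x * ((x/2) ^ ν * auxG ν (x^2/4)) =
      (2 / x) * (auxF (ν+1) (x^2/4) * auxG ν (x^2/4)) := by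
    rw [k2]; field_simp
  rw [e, hrec]
  have h1 : (2/x) * (((ν+1) * auxF ν (x^2/4) + x^2/4 * auxF (ν-1) (x^2/4)) * auxG ν (x^2/4)) =
    (2 * ν + 2) / x * (auxF ν (x^2/4) * auxG ν (x^2/4)) +
      ((x/2) * auxF (ν-1) (x^2/4)) * auxG ν (x^2/4) := by
    field_simp; ring
  rw [h1]
  have h2 : ((x/2) * auxF (ν-1) (x^2/4)) * auxG ν (x^2/4) ≤ 1 :=
    (mul_le_mul_of_nonneg_right hF hG).trans hFG
  have h3 : (2 * ν + 2) / x * (auxF ν (x^2/4) * auxG ν (x^2/4)) ≤ (2 * ν + 2) / x * 1 :=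
    mul_le_mul_of_nonneg_left hFG (div_nonneg (by linarith) hx.le)
  have h4 : (2 * ν + 2) / x < (2 * ν + 3) / x := by
    gcongr; norm_num
  linarith
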